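/- arXiv:1807.00497 — 2 statements merged into one kernel-verified Lean document; each statement's English description precedes it below -/
import Mathlib

section
/- Let v₊, v₋ ∈ ℝ^{n+2} be null vectors with ζ := ⟨v₊,v₋⟩ > 0 and let b > 0. Then: (i) there is a constant B such that for all p ∈ (0,b) and all t ∈ (0,p], (t/p)^ζ · ‖exp(−ln(t/p)·(v₋∧v₊))‖ ≤ B; and (ii) for every p ∈ (0,b), (t/p)^ζ · exp(−ln(t/p)·(v₋∧v₊)) converges to (v₊v₋*)/ζ as t → 0⁺. -/
open scoped BigOperators Topology
open Filter Set MeasureTheory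

noncomputable section

abbrev E (n : ℕ) := EuclideanSpace ℝ (Fin (n + 2))

/-- Minkowski inner product of signature (n+1,1). -/
def mink {n : ℕ} (x y : E n) : ℝ :=
  ∑ i, (if i = Fin.last (n + 1) then (-1 : ℝ) else 1) * x i * y i

variable {n : ℕ}

lemma mink_comm (x y : E n) : mink x y = mink y x :=
  Finset.sum_congr rfl fun i _ => by ring

lemma mink_add_right (v x y : E n) : mink v (x + y) = mink v x + mink v y := by
  simp [mink, mul_add, Finset.sum_add_distrib]

lemma mink_smul_right (v : E n) (c : ℝ) (x : E n) : mink v (c • x) = c * mink v x := by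
  unfold mink
  rw [Finset.mul_sum]
  refine Finset.sum_congr rfl fun i _ => ?_
  simp only [PiLp.smul_apply, smul_eq_mul]
  ring

lemma mink_add_left (x y v : E n) : mink (x + y) v = mink x v + mink y v := by
  rw [mink_comm, mink_add_right, mink_comm v x, mink_comm v y]

lemma mink_smul_left (c : ℝ) (x v : E n) : mink (c • x) v = c * mink x v := by
  rw [mink_comm, mink_smul_right, mink_comm v x]

/-- `v ∧ w` as an endomorphism: `x ↦ ⟨v,x⟩ w − ⟨w,x⟩ v`. -/
def wedge {n : ℕ} (v w : E n) : E n →L[ℝ] E n :=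
  LinearMap.toContinuousLinearMap
    { toFun := fun x => mink v x • w - mink w x • v
      map_add' := by
        intro x y
        simp only [mink_add_right, add_smul]
        abel
      map_smul' := by
        intro c x
        simp only [mink_smul_right, RingHom.id_apply, mul_smul, smul_sub] }

/-- rank one endomorphism `vw* : x ↦ ⟨x,w⟩ v`. -/
def rankOne {n : ℕ} (v w : E n) : E n →L[ℝ] E n :=
  LinearMap.toContinuousLinearMap
    { toFun := fun x => mink x w • v
      map_add' := by
        intro x y
        simp only [mink_add_left, add_smul]
      map_smul' := by
        intro c x
        simp only [mink_smul_left, RingHom.id_apply, mul_smul] }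

/-!
Put `r = t / p` and `ζ = ⟨v₊, v₋⟩`. The operator `v₋ ∧ v₊` is diagonalizable with eigenvalues `ζ`,
`-ζ`, `0`, and `P = v₊ v₋* / ζ`, `Q = v₋ v₊* / ζ`, `1 - P - Q` are the spectral projections. Hence
`r ^ ζ • exp (-log r • (v₋ ∧ v₊)) = P + r ^ (2 * ζ) • Q + r ^ ζ • (1 - P - Q)`, where the powers of
`r` are bounded by `1` for `r ≤ 1` and vanish in the limit `r → 0⁺`.
-/

section CompleteOrthogonalIdempotents

lemma sum_smul_pow_of_completeOrthogonalIdempotents {R A ι : Type*} [CommSemiring R] [Semiring A]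
    [Algebra R A] [Fintype ι] {e : ι → A} (he : CompleteOrthogonalIdempotents e) (c : ι → R)
    (k : ℕ) : (∑ i, c i • e i) ^ k = ∑ i, c i ^ k • e i := by
  classical
  induction k with
  | zero => simp only [pow_zero, one_smul, he.complete]
  | succ k ih =>
    simp only [pow_succ, ih, Finset.sum_mul_sum, smul_mul_smul_comm, he.mul_eq, smul_ite,
      smul_zero, Finset.sum_ite_eq, Finset.mem_univ, if_true]

lemma exp_sum_smul_of_completeOrthogonalIdempotents {𝕜 A ι : Type*} [RCLike 𝕜] [NormedRing A]
    [NormedAlgebra 𝕜 A] [CompleteSpace A] [Fintype ι] {e : ι → A}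
    (he : CompleteOrthogonalIdempotents e) (c : ι → 𝕜) :
    NormedSpace.exp (∑ i, c i • e i) = ∑ i, NormedSpace.exp (c i) • e i := by
  have hseries (k : ℕ) : (k.factorial⁻¹ : 𝕜) • (∑ i, c i • e i) ^ k =
      ∑ i, ((k.factorial⁻¹ : 𝕜) • c i ^ k) • e i := by
    rw [sum_smul_pow_of_completeOrthogonalIdempotents he, Finset.smul_sum]
    simp only [smul_assoc]
  refine (NormedSpace.exp_series_hasSum_exp' (𝕂 := 𝕜) (∑ i, c i • e i)).unique ?_
  simp only [hseries]
  exact hasSum_sum fun i _ => (NormedSpace.exp_series_hasSum_exp' (c i)).smul_const (e i)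

variable {A ι : Type*} [NormedRing A] [NormedAlgebra ℝ A] [CompleteSpace A] [Fintype ι]
  {e : ι → A}

lemma rpow_smul_exp_neg_log_smul_sum (he : CompleteOrthogonalIdempotents e) (c : ι → ℝ) (μ : ℝ)
    {r : ℝ} (hr : 0 < r) :
    r ^ μ • NormedSpace.exp ((-Real.log r) • ∑ i, c i • e i) = ∑ i, r ^ (μ - c i) • e i := by
  have hterm (i : ι) : r ^ μ * Real.exp (-Real.log r * c i) = r ^ (μ - c i) := by
    rw [sub_eq_add_neg, Real.rpow_add hr, Real.rpow_def_of_pos hr (-c i), neg_mul, mul_neg]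
  simp only [Finset.smul_sum, smul_smul, exp_sum_smul_of_completeOrthogonalIdempotents he,
    ← Real.exp_eq_exp_ℝ, hterm]

lemma rpow_mul_norm_exp_neg_log_smul_sum_le (he : CompleteOrthogonalIdempotents e) {c : ι → ℝ}
    {μ : ℝ} (hc : ∀ i, c i ≤ μ) {r : ℝ} (hr : r ∈ Ioc (0 : ℝ) 1) :
    r ^ μ * ‖NormedSpace.exp ((-Real.log r) • ∑ i, c i • e i)‖ ≤ ∑ i, ‖e i‖ := by
  rw [← norm_smul_of_nonneg (Real.rpow_nonneg hr.1.le μ),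
    rpow_smul_exp_neg_log_smul_sum he c μ hr.1]
  refine norm_sum_le_of_le _ fun i _ => ?_
  rw [norm_smul_of_nonneg (Real.rpow_nonneg hr.1.le _)]
  exact mul_le_of_le_one_left (norm_nonneg _)
    (Real.rpow_le_one hr.1.le hr.2 (sub_nonneg.2 (hc i)))

lemma tendsto_rpow_smul_exp_neg_log_smul_sum (he : CompleteOrthogonalIdempotents e) {c : ι → ℝ}
    {μ : ℝ} {j : ι} (hj : c j = μ) (hlt : ∀ i ≠ j, c i < μ) :
    Tendsto (fun r : ℝ => r ^ μ • NormedSpace.exp ((-Real.log r) • ∑ i, c i • e i))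
      (𝓝[>] 0) (𝓝 (e j)) := by
  classical
  have hpow (i : ι) :
      Tendsto (fun r : ℝ => r ^ (μ - c i)) (𝓝[>] 0) (𝓝 (if i = j then 1 else 0)) := by
    split_ifs with hij
    · simp only [hij, hj, sub_self, Real.rpow_zero, tendsto_const_nhds]
    · exact (tendsto_nhdsWithin_of_tendsto_nhds tendsto_id).rpow_const_nhds_zero
        (sub_pos.2 (hlt i hij))
  have hsum : Tendsto (fun r : ℝ => ∑ i, r ^ (μ - c i) • e i) (𝓝[>] 0) (𝓝 (e j)) := by
    simpa only [ite_smul, one_smul, zero_smul, Finset.sum_ite_eq', Finset.mem_univ, if_true]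
      using tendsto_finsetSum Finset.univ fun i _ => (hpow i).smul_const (e i)
  refine hsum.congr' ?_
  filter_upwards [self_mem_nhdsWithin] with r hr
  exact (rpow_smul_exp_neg_log_smul_sum he c μ hr).symm

end CompleteOrthogonalIdempotents

lemma sum_signType {M : Type*} [AddCommMonoid M] (f : SignType → M) :
    ∑ s, f s = f .zero + f .neg + f .pos := by
  change ∑ s ∈ {SignType.zero, SignType.neg, SignType.pos}, f s = _
  simp [add_assoc]

section BilinearForm

variable {V : Type*} [NormedAddCommGroup V] [NormedSpace ℝ V]

/-- The rank-one operator `x ↦ β(x, w) v` of a continuous bilinear form `β`, the `v w*` of the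
pole forms when `β` is the Minkowski product. -/
def formRankOne (β : V →L[ℝ] V →L[ℝ] ℝ) (v w : V) : V →L[ℝ] V :=
  (β.flip w).smulRight v

/-- The operator `x ↦ β(v, x) w - β(w, x) v` of a continuous bilinear form `β`, which is
`β`-skew-adjoint when `β` is symmetric; it is the `v ∧ w` of the pole forms when `β` is the
Minkowski product. -/
def formWedge (β : V →L[ℝ] V →L[ℝ] ℝ) (v w : V) : V →L[ℝ] V :=
  (β v).smulRight w - (β w).smulRight v

lemma formRankOne_mul_formRankOne (β : V →L[ℝ] V →L[ℝ] ℝ) (v w v' w' : V) :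
    formRankOne β v w * formRankOne β v' w' = β v' w • formRankOne β v w' := by
  ext x
  simp [formRankOne, smul_smul, mul_comm]

variable {β : V →L[ℝ] V →L[ℝ] ℝ}

lemma formWedge_eq_sub (hβ : ∀ x y, β x y = β y x) (v w : V) :
    formWedge β v w = formRankOne β w v - formRankOne β v w := by
  ext x
  simp [formWedge, formRankOne, hβ v x, hβ w x]

/-- The spectral projections of `formWedge β w v` for null vectors `v`, `w` with `β v w ≠ 0`: the
index `s` stands for the eigenvalue `s * β v w`, whose eigenspace is the line of `v` for `s = 1`, the
line of `w` for `s = -1` and the common orthogonal complement of `v` and `w` for `s = 0`. -/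
def nullPairProjection (β : V →L[ℝ] V →L[ℝ] ℝ) (v w : V) : SignType → (V →L[ℝ] V)
  | .pos => (β v w)⁻¹ • formRankOne β v w
  | .neg => (β v w)⁻¹ • formRankOne β w v
  | .zero => 1 - (β v w)⁻¹ • formRankOne β v w - (β v w)⁻¹ • formRankOne β w v

variable {v w : V}

lemma completeOrthogonalIdempotents_nullPairProjection (hβ : ∀ x y, β x y = β y x)
    (hv : β v v = 0) (hw : β w w = 0) (hvw : β v w ≠ 0) :
    CompleteOrthogonalIdempotents (nullPairProjection β v w) := by
  set P := (β v w)⁻¹ • formRankOne β v w with hP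
  set Q := (β v w)⁻¹ • formRankOne β w v with hQ
  have hPP : P * P = P := by
    simp [hP, formRankOne_mul_formRankOne, hvw]
  have hQQ : Q * Q = Q := by
    simp [hQ, formRankOne_mul_formRankOne, hβ w v, hvw]
  have hPQ : P * Q = 0 := by
    simp [hP, hQ, formRankOne_mul_formRankOne, hw]
  have hQP : Q * P = 0 := by
    simp [hP, hQ, formRankOne_mul_formRankOne, hv]
  refine CompleteOrthogonalIdempotents.iff_ortho_complete.2 ⟨?_, ?_⟩
  · rintro (_ | _ | _) (_ | _ | _) hne <;>
      first
      | exact absurd rfl hne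
      | simp only [nullPairProjection, ← hP, ← hQ, mul_sub, sub_mul, mul_one, one_mul, hPP, hQQ,
          hPQ, hQP, sub_zero, sub_self]
  · rw [sum_signType]
    simp only [nullPairProjection]
    abel

lemma formWedge_eq_sum_nullPairProjection (hβ : ∀ x y, β x y = β y x) (hvw : β v w ≠ 0) :
    formWedge β w v = ∑ s : SignType, ((s : ℝ) * β v w) • nullPairProjection β v w s := by
  calc formWedge β w v
      = β v w • nullPairProjection β v w .pos - β v w • nullPairProjection β v w .neg := by
        simp only [nullPairProjection, smul_inv_smul₀ hvw, formWedge_eq_sub hβ]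
    _ = ∑ s : SignType, ((s : ℝ) * β v w) • nullPairProjection β v w s := by
        simp [sum_signType, sub_eq_neg_add]

theorem stmt1_general [CompleteSpace V] {vp vm : V} (hβ : ∀ x y, β x y = β y x)
    (hvp : β vp vp = 0) (hvm : β vm vm = 0) (hζ : 0 < β vp vm) :
    (∃ B : ℝ, ∀ p > (0 : ℝ), ∀ t ∈ Ioc (0 : ℝ) p,
        (t / p) ^ β vp vm *
          ‖NormedSpace.exp ((-Real.log (t / p)) • formWedge β vm vp)‖ ≤ B) ∧
    ∀ p > (0 : ℝ),
      Tendsto (fun t : ℝ => (t / p) ^ β vp vm •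
          NormedSpace.exp ((-Real.log (t / p)) • formWedge β vm vp))
        (𝓝[>] 0) (𝓝 ((β vp vm)⁻¹ • formRankOne β vp vm)) := by
  have he := completeOrthogonalIdempotents_nullPairProjection hβ hvp hvm hζ.ne'
  have hlt : ∀ s ≠ SignType.pos, (s : ℝ) * β vp vm < β vp vm := by
    rintro (_ | _ | _) hs <;> simp_all
  have hle (s : SignType) : (s : ℝ) * β vp vm ≤ β vp vm := by
    cases s <;> simp [hζ.le]
  rw [formWedge_eq_sum_nullPairProjection hβ hζ.ne']
  refine ⟨⟨_, fun p hp t ht => rpow_mul_norm_exp_neg_log_smul_sum_le he hle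
    ⟨div_pos ht.1 hp, (div_le_one hp).2 ht.2⟩⟩, fun p hp => ?_⟩
  have hdiv : Tendsto (· / p) (𝓝[>] (0 : ℝ)) (𝓝[>] 0) := by
    simpa only [comap_mulLeft_nhdsGT_zero (inv_pos.2 hp), div_eq_inv_mul]
      using tendsto_comap (f := (p⁻¹ * ·)) (x := 𝓝[>] (0 : ℝ))
  exact (tendsto_rpow_smul_exp_neg_log_smul_sum he (one_mul _) hlt).comp hdiv

end BilinearForm

/-- The Minkowski inner product as a continuous bilinear form. -/
def minkForm (n : ℕ) : E n →L[ℝ] E n →L[ℝ] ℝ :=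
  (LinearMap.mk₂ ℝ mink mink_add_left mink_smul_left mink_add_right
    fun c x y => mink_smul_right x c y).toContinuousBilinearMap

lemma formWedge_minkForm (v w : E n) : formWedge (minkForm n) v w = wedge v w := rfl

lemma formRankOne_minkForm (v w : E n) : formRankOne (minkForm n) v w = rankOne v w := rfl

/-- Proposition 3.1, part 1: bound and limit for Minkowski pure pole forms. -/
theorem stmt1 {n : ℕ} (vp vm : E n)
    (hvp : mink vp vp = 0) (hvm : mink vm vm = 0)
    (hζ : 0 < mink vp vm) (b : ℝ) (hb : 0 < b) :
    (∃ B : ℝ, ∀ p ∈ Set.Ioo (0:ℝ) b, ∀ t ∈ Set.Ioc (0:ℝ) p,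
        (t / p) ^ (mink vp vm) *
          ‖NormedSpace.exp ((-Real.log (t / p)) • wedge vm vp)‖ ≤ B) ∧
    ∀ p ∈ Set.Ioo (0:ℝ) b,
      Tendsto (fun t : ℝ => (t / p) ^ (mink vp vm) •
          NormedSpace.exp ((-Real.log (t / p)) • wedge vm vp))
        (𝓝[>] 0) (𝓝 ((mink vp vm)⁻¹ • rankOne vp vm)) := by
  rw [← formWedge_minkForm, ← formRankOne_minkForm]
  obtain ⟨⟨B, hB⟩, hlim⟩ := stmt1_general (β := minkForm n) mink_comm hvp hvm hζ
  exact ⟨⟨B, fun p hp => hB p hp.1⟩, fun p hp => hlim p hp.1⟩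
end
end

section
/- Let v₀ ∈ ℝ^{n+2} be null and nonzero, let w̃ satisfy ⟨v₀,w̃⟩ = 0 and ‖w̃‖² > 0, set A := v₀∧w̃, let b > 0, and let χ:(0,b) → End(ℝ^{n+2}) be continuous and bounded. Then there is a constant C such that for all p,t ∈ (0,b): ‖exp(−ln(t/p)·A) ∘ χ(t) ∘ exp(ln(t/p)·A)‖ ≤ C·(1 + (ln(t/p))²)². Moreover, for each p ∈ (0,b) the function t ↦ (1 + (ln(t/p))²)² is integrable over (0,b), t·(1 + (ln(t/p))²)² → 0 as t → 0⁺, and ∫₀^p (1 + (ln(t/p))²)² dt → 0 as p → 0⁺. -/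
/-!
The wedge `A = v ∧ w` satisfies `A³ = (⟨v,w⟩² - ‖v‖²‖w‖²) A`, so `A³ = 0` as soon as the Gram
determinant of `v, w` vanishes. The exponential of `sA` is then a polynomial of degree two in `s`,
so conjugating a bounded `χ` by `exp (sA)` costs at most a factor of order four in `s`. With
`s = log (t / p)` the growth is polynomial in a logarithm, hence dominated near `0` by every
negative power of `t`. The substitution `t = p x` turns the last integral into `p` times a constant.
-/

open scoped BigOperators Topology
open Filter Set MeasureTheory

noncomputable section

variable {n : ℕ}

open scoped Nat

section Wedge

lemma mink_sub_right (v x y : E n) : mink v (x - y) = mink v x - mink v y := by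
  rw [sub_eq_add_neg, ← neg_one_smul ℝ y, mink_add_right, mink_smul_right]
  ring

lemma wedge_apply (v w x : E n) : wedge v w x = mink v x • w - mink w x • v := rfl

lemma wedge_pow_three (v w : E n) :
    wedge v w ^ 3 = (mink v w ^ 2 - mink v v * mink w w) • wedge v w := by
  ext1 x
  simp only [pow_succ, pow_zero, one_mul, mul_apply_eq_comp, smul_apply, wedge_apply,
    mink_sub_right, mink_smul_right, mink_comm w v]
  module

lemma wedge_pow_three_eq_zero {v w : E n} (h : mink v w ^ 2 = mink v v * mink w w) :
    wedge v w ^ 3 = 0 := by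
  rw [wedge_pow_three, sub_eq_zero.2 h, zero_smul ℝ (wedge v w)]

end Wedge

section NilpotentExp

lemma exp_eq_sum_range_of_pow_eq_zero (𝕜 : Type*) {R : Type*} [Field 𝕜] [CharZero 𝕜] [Ring R]
    [Algebra 𝕜 R] [TopologicalSpace R] [IsTopologicalRing R] {a : R} {k : ℕ} (ha : a ^ k = 0) :
    NormedSpace.exp a = ∑ i ∈ Finset.range k, (i ! : 𝕜)⁻¹ • a ^ i := by
  rw [NormedSpace.exp_eq_tsum 𝕜]
  refine tsum_eq_sum fun i hi => ?_
  rw [pow_eq_zero_of_le (by simpa using hi) ha, smul_zero]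

variable {𝕜 R : Type*} [RCLike 𝕜] [NormedRing R] [NormedAlgebra 𝕜 R] {a : R} {k : ℕ}

lemma norm_exp_smul_le_of_pow_eq_zero (ha : a ^ (k + 1) = 0) (s : 𝕜) :
    ‖NormedSpace.exp (s • a)‖ ≤
      (∑ i ∈ Finset.range (k + 1), (i ! : ℝ)⁻¹ * ‖a ^ i‖) * (1 + ‖s‖) ^ k := by
  have hsa : (s • a) ^ (k + 1) = 0 := by rw [smul_pow, ha, smul_zero]
  rw [exp_eq_sum_range_of_pow_eq_zero 𝕜 hsa, Finset.sum_mul]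
  refine norm_sum_le_of_le _ fun i hi => ?_
  have hpow : ‖s‖ ^ i ≤ (1 + ‖s‖) ^ k :=
    calc ‖s‖ ^ i ≤ (1 + ‖s‖) ^ i := by gcongr; linarith
      _ ≤ (1 + ‖s‖) ^ k :=
        pow_le_pow_right₀ (by linarith [norm_nonneg s]) (Finset.mem_range_succ_iff.1 hi)
  calc ‖(i ! : 𝕜)⁻¹ • (s • a) ^ i‖ = (i ! : ℝ)⁻¹ * ‖a ^ i‖ * ‖s‖ ^ i := by
        rw [smul_pow, norm_smul, norm_smul, norm_inv, RCLike.norm_natCast, norm_pow]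
        ring
    _ ≤ (i ! : ℝ)⁻¹ * ‖a ^ i‖ * (1 + ‖s‖) ^ k := by gcongr

lemma norm_exp_neg_smul_mul_mul_exp_smul_le_of_pow_eq_zero (ha : a ^ (k + 1) = 0) (s : 𝕜) (x : R) :
    ‖NormedSpace.exp (-s • a) * x * NormedSpace.exp (s • a)‖ ≤
      2 ^ k * (∑ i ∈ Finset.range (k + 1), (i ! : ℝ)⁻¹ * ‖a ^ i‖) ^ 2 * ‖x‖ *
        (1 + ‖s‖ ^ 2) ^ k := by
  set K := ∑ i ∈ Finset.range (k + 1), (i ! : ℝ)⁻¹ * ‖a ^ i‖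
  have hneg : ‖NormedSpace.exp (-s • a)‖ ≤ K * (1 + ‖s‖) ^ k := by
    simpa only [norm_neg] using norm_exp_smul_le_of_pow_eq_zero ha (-s)
  have hpos : ‖NormedSpace.exp (s • a)‖ ≤ K * (1 + ‖s‖) ^ k :=
    norm_exp_smul_le_of_pow_eq_zero ha s
  have hsq : (1 + ‖s‖) ^ 2 ≤ 2 * (1 + ‖s‖ ^ 2) := by
    simpa only [one_pow] using add_sq_le (a := 1) (b := ‖s‖)
  calc _ ≤ ‖NormedSpace.exp (-s • a)‖ * ‖x‖ * ‖NormedSpace.exp (s • a)‖ := norm_mul₃_le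
    _ ≤ K * (1 + ‖s‖) ^ k * ‖x‖ * (K * (1 + ‖s‖) ^ k) := by gcongr
    _ = K ^ 2 * ‖x‖ * ((1 + ‖s‖) ^ 2) ^ k := by rw [pow_right_comm]; ring
    _ ≤ K ^ 2 * ‖x‖ * (2 * (1 + ‖s‖ ^ 2)) ^ k := by gcongr
    _ = 2 ^ k * K ^ 2 * ‖x‖ * (1 + ‖s‖ ^ 2) ^ k := by rw [mul_pow]; ring

end NilpotentExp

section PolynomialLog

open Polynomial

lemma isLittleO_eval_log_rpow_nhdsGT_zero (P : ℝ[X]) {s : ℝ} (hs : s < 0) :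
    (fun x => P.eval (Real.log x)) =o[𝓝[>] 0] fun x => x ^ s := by
  induction P using Polynomial.induction_on' with
  | add P Q hP hQ => simpa only [eval_add] using hP.add hQ
  | monomial k c =>
    have hlog := isLittleO_abs_log_rpow_rpow_nhdsGT_zero k hs
    simp only [Real.rpow_natCast, ← abs_pow] at hlog
    simpa only [eval_monomial] using hlog.of_abs_left.const_mul_left c

lemma tendsto_mul_eval_log_nhdsGT_zero (P : ℝ[X]) :
    Tendsto (fun x => x * P.eval (Real.log x)) (𝓝[>] 0) (𝓝 0) := by
  refine (isLittleO_eval_log_rpow_nhdsGT_zero P neg_one_lt_zero).tendsto_div_nhds_zero.congr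
    fun x => ?_
  rw [Real.rpow_neg_one, div_inv_eq_mul, mul_comm]

lemma integrableOn_eval_log_Ioo_zero (P : ℝ[X]) (b : ℝ) :
    IntegrableOn (fun x => P.eval (Real.log x)) (Ioo 0 b) := by
  have hmeas : Measurable fun x => P.eval (Real.log x) :=
    P.continuous.measurable.comp Real.measurable_log
  have hrpow : IntegrableAtFilter (fun x : ℝ => x ^ (-1 / 2 : ℝ)) (𝓝[>] 0) :=
    ⟨Ioo 0 1, Ioo_mem_nhdsGT one_pos,
      (intervalIntegral.integrableOn_Ioo_rpow_iff one_pos).2 (by norm_num)⟩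
  have hzero : IntegrableAtFilter (fun x => P.eval (Real.log x)) (𝓝[>] 0) :=
    (isLittleO_eval_log_rpow_nhdsGT_zero P (by norm_num)).isBigO.integrableAtFilter
      hmeas.stronglyMeasurable.stronglyMeasurableAtFilter hrpow
  obtain ⟨s, hs, hint⟩ := hzero
  obtain ⟨ε, hε : 0 < ε, hεs⟩ := mem_nhdsGT_iff_exists_Ioo_subset.1 hs
  have hcont : ContinuousOn (fun x => P.eval (Real.log x)) (Icc ε b) :=
    P.continuous.comp_continuousOn
      (Real.continuousOn_log.mono fun x hx => (hε.trans_le hx.1).ne')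
  refine ((hint.mono_set hεs).union hcont.integrableOn_Icc).mono_set fun x hx => ?_
  exact (lt_or_ge x ε).imp (fun h => ⟨hx.1, h⟩) fun h => ⟨h, hx.2.le⟩

lemma eval_log_div (P : ℝ[X]) {t p : ℝ} (ht : t ≠ 0) (hp : p ≠ 0) :
    P.eval (Real.log (t / p)) = (P.comp (X - C (Real.log p))).eval (Real.log t) := by
  rw [Real.log_div ht hp, eval_comp, eval_sub, eval_X, eval_C]

variable {p : ℝ}

lemma tendsto_mul_eval_log_div_nhdsGT_zero (P : ℝ[X]) (hp : p ≠ 0) :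
    Tendsto (fun t => t * P.eval (Real.log (t / p))) (𝓝[>] 0) (𝓝 0) := by
  refine (tendsto_mul_eval_log_nhdsGT_zero (P.comp (X - C (Real.log p)))).congr' ?_
  filter_upwards [self_mem_nhdsWithin] with t (ht : 0 < t)
  rw [eval_log_div P ht.ne' hp]

lemma integrableOn_eval_log_div_Ioo_zero (P : ℝ[X]) (hp : p ≠ 0) (b : ℝ) :
    IntegrableOn (fun t => P.eval (Real.log (t / p))) (Ioo 0 b) :=
  (integrableOn_eval_log_Ioo_zero (P.comp (X - C (Real.log p))) b).congr_fun
    (fun _ ht => (eval_log_div P ht.1.ne' hp).symm) measurableSet_Ioo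

end PolynomialLog

section Scaling

variable {F : Type*} [NormedAddCommGroup F] [NormedSpace ℝ F]

lemma setIntegral_Ioo_zero_comp_div (f : ℝ → F) {p : ℝ} (hp : 0 < p) :
    ∫ t in Ioo 0 p, f (t / p) = p • ∫ x in Ioo (0 : ℝ) 1, f x := by
  rw [← integral_Ioc_eq_integral_Ioo, ← integral_Ioc_eq_integral_Ioo,
    ← intervalIntegral.integral_of_le hp.le, ← intervalIntegral.integral_of_le zero_le_one,
    intervalIntegral.integral_comp_div f hp.ne', zero_div, div_self hp.ne']

lemma tendsto_setIntegral_Ioo_zero_comp_div_nhdsGT_zero (f : ℝ → F) :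
    Tendsto (fun p => ∫ t in Ioo 0 p, f (t / p)) (𝓝[>] 0) (𝓝 0) := by
  have hlim : Tendsto (fun p : ℝ => p • ∫ x in Ioo (0 : ℝ) 1, f x) (𝓝[>] 0) (𝓝 0) :=
    ((continuous_id.smul continuous_const).tendsto' (0 : ℝ) 0 (zero_smul ℝ _)).mono_left
      nhdsWithin_le_nhds
  refine hlim.congr' ?_
  filter_upwards [self_mem_nhdsWithin] with p hp
  exact (setIntegral_Ioo_zero_comp_div f hp).symm

end Scaling

open Polynomial in
theorem stmt6_general {R : Type*} [NormedRing R] [NormedAlgebra ℝ R] {a : R} {k : ℕ}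
    (ha : a ^ (k + 1) = 0) {b : ℝ} {χ : ℝ → R} (hχb : ∃ D : ℝ, ∀ t ∈ Ioo 0 b, ‖χ t‖ ≤ D) :
    (∃ C : ℝ, ∀ p ∈ Ioo 0 b, ∀ t ∈ Ioo 0 b,
        ‖NormedSpace.exp (-Real.log (t / p) • a) * χ t * NormedSpace.exp (Real.log (t / p) • a)‖ ≤
          C * (1 + Real.log (t / p) ^ 2) ^ k) ∧
    (∀ p ∈ Ioo 0 b,
      IntegrableOn (fun t => (1 + Real.log (t / p) ^ 2) ^ k) (Ioo 0 b) ∧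
      Tendsto (fun t => t * (1 + Real.log (t / p) ^ 2) ^ k) (𝓝[>] 0) (𝓝 0)) ∧
    Tendsto (fun p => ∫ t in Ioo 0 p, (1 + Real.log (t / p) ^ 2) ^ k) (𝓝[>] 0) (𝓝 0) := by
  refine ⟨?_, fun p hp => ⟨?_, ?_⟩,
    tendsto_setIntegral_Ioo_zero_comp_div_nhdsGT_zero fun x => (1 + Real.log x ^ 2) ^ k⟩
  · obtain ⟨D, hD⟩ := hχb
    refine ⟨2 ^ k * (∑ i ∈ Finset.range (k + 1), (i ! : ℝ)⁻¹ * ‖a ^ i‖) ^ 2 * D,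
      fun p _ t ht => ?_⟩
    refine (norm_exp_neg_smul_mul_mul_exp_smul_le_of_pow_eq_zero ha _ _).trans ?_
    rw [Real.norm_eq_abs (Real.log _), sq_abs]
    gcongr
    exact hD t ht
  · have hint := integrableOn_eval_log_div_Ioo_zero ((1 + X ^ 2) ^ k) hp.1.ne' b
    simpa only [eval_pow, eval_add, eval_one, eval_X] using hint
  · have hlim := tendsto_mul_eval_log_div_nhdsGT_zero ((1 + X ^ 2) ^ k) hp.1.ne'
    simpa only [eval_pow, eval_add, eval_one, eval_X] using hlim

/-- Lemma 3.2, degenerate case. -/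
theorem stmt6 {n : ℕ} (v0 w : E n)
    (h0 : mink v0 v0 = 0) (hv0 : v0 ≠ 0)
    (horth : mink v0 w = 0) (hw : 0 < mink w w)
    (b : ℝ) (hb : 0 < b) (χ : ℝ → E n →L[ℝ] E n)
    (hχc : ContinuousOn χ (Set.Ioo 0 b))
    (hχb : ∃ D : ℝ, ∀ t ∈ Set.Ioo (0:ℝ) b, ‖χ t‖ ≤ D) :
    (∃ C : ℝ, ∀ p ∈ Set.Ioo (0:ℝ) b, ∀ t ∈ Set.Ioo (0:ℝ) b,
        ‖NormedSpace.exp ((-Real.log (t / p)) • wedge v0 w) * χ t *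
            NormedSpace.exp ((Real.log (t / p)) • wedge v0 w)‖ ≤
          C * (1 + (Real.log (t / p)) ^ 2) ^ 2) ∧
    (∀ p ∈ Set.Ioo (0:ℝ) b,
      IntegrableOn (fun t : ℝ => (1 + (Real.log (t / p)) ^ 2) ^ 2) (Set.Ioo 0 b) ∧
      Tendsto (fun t : ℝ => t * (1 + (Real.log (t / p)) ^ 2) ^ 2) (𝓝[>] 0) (𝓝 0)) ∧
    Tendsto (fun p : ℝ => ∫ t in Set.Ioo (0:ℝ) p, (1 + (Real.log (t / p)) ^ 2) ^ 2)
      (𝓝[>] 0) (𝓝 0) :=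
  stmt6_general (wedge_pow_three_eq_zero (by rw [h0, horth]; ring)) hχb
end
end
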